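/- Let A be an additive category, B an additive category with countable coproducts, and F : A ⥤ C(B) an additive functor. Then for every morphism f : M^• → N^• in C(A), the extended functor F^C satisfies F^C(Cone(f)) ≅ Cone(F^C(f)): the image under F^C of the mapping cone of f is isomorphic, as a cochain complex over B, to the mapping cone of F^C(f) : F^C(M) → F^C(N). -/

import Mathlib

/-!
`F` is additive, so it commutes with mapping cones columnwise: `F^{DC}(Cone f)` is the mapping cone
of `F^{DC}(f)`, formed in the category of complexes of complexes
(`mappingCone.mapHomologicalComplexIso`). What remains is that totalization commutes with mapping
cones: for a morphism `φ : K ⟶ L` of bicomplexes, `Tot (Cone φ) ≅ Cone (Tot φ)`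
(`TotalCone.totalConeIso`).

In degree `n` both sides are `⨁_{i + j = n} K^{i+1,j} ⊕ L^{i,j}`, and the identification carries no
sign. Indeed the summand `K^{i+1,j}` sits in column `i` of `Cone φ`, so its vertical differential
has sign `(-1)^i` in `Tot (Cone φ)`; in `Cone (Tot φ)` it has sign `-(-1)^(i+1)`, which is the same.
The horizontal differential of `K` is negated on both sides.

The morphism `Cone (Tot φ) ⟶ Tot (Cone φ)` is built from the universal property of the mapping
cone: a cochain `inlTot` of degree `-1` on `Tot K` whose coboundary is `Tot φ ≫ Tot inr`
(`δ_inlTot`, where the sign comparison takes place). It is invertible degreewise.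
-/


open CategoryTheory CategoryTheory.Limits

section ExtensionOfFunctors

variable {A : Type*} [Category A] [Preadditive A] [HasBinaryBiproducts A]
variable {B : Type*} [Category B] [Preadditive B] [HasCountableCoproducts B]

instance hasTotalUpInt (K : HomologicalComplex₂ B (ComplexShape.up ℤ) (ComplexShape.up ℤ)) :
    K.HasTotal (ComplexShape.up ℤ) :=
  fun _ => inferInstance

instance : HasBinaryBiproducts B := HasBinaryBiproducts.of_hasBinaryCoproducts

/-- Given an additive functor `F : A ⥤ C(B)`, the associated double complex functor
`F^{DC} : C(A) ⥤ DC(B)`: the `i`-th column of `F^{DC}(M)` is the complex `F(M^i)` and its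
horizontal differentials are the chain maps `F(d_M^i)`. -/
noncomputable def extDC (F : A ⥤ CochainComplex B ℤ) [F.Additive] :
    CochainComplex A ℤ ⥤
      HomologicalComplex₂ B (ComplexShape.up ℤ) (ComplexShape.up ℤ) :=
  F.mapHomologicalComplex (ComplexShape.up ℤ)

/-- The extended functor `F^C : C(A) ⥤ C(B)` of an additive functor `F : A ⥤ C(B)`,
obtained by totalizing the double complex `F^{DC}(M)` with the standard sign convention,
so that `F^C(M)^n = ⊕_{i} F(M^i)^{n−i}`. -/
noncomputable def extC (F : A ⥤ CochainComplex B ℤ) [F.Additive] :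
    CochainComplex A ℤ ⥤ CochainComplex B ℤ :=
  extDC F ⋙
    HomologicalComplex₂.totalFunctor B (ComplexShape.up ℤ) (ComplexShape.up ℤ)
      (ComplexShape.up ℤ)

namespace TotalCone

open CochainComplex CochainComplex.HomComplex HomologicalComplex₂ ComplexShape

/-- The differential of the total complex on the summand `K^{i,j}`, with explicit target indices. -/
lemma ι_d (K : HomologicalComplex₂ B (up ℤ) (up ℤ)) (i i' j j' n n' : ℤ)
    (hi : i + 1 = i') (hj : j + 1 = j') (h : i + j = n) (h₁ : i' + j = n') (h₂ : i + j' = n') :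
    K.ιTotal (up ℤ) i j n h ≫ (K.total (up ℤ)).d n n' =
      (K.d i i').f j ≫ K.ιTotal (up ℤ) i' j n' h₁ +
        i.negOnePow • ((K.X i).d j j' ≫ K.ιTotal (up ℤ) i j' n' h₂) := by
  rw [total_d, Preadditive.comp_add, ι_D₁, ι_D₂,
    K.d₁_eq (up ℤ) (i₁ := i) (i₁' := i') hi j n' h₁,
    K.d₂_eq (up ℤ) i (i₂ := j) (i₂' := j') hj n' h₂]
  change (1 : ℤˣ) • _ + i.negOnePow • _ = _
  rw [one_smul]

variable {K L : HomologicalComplex₂ B (up ℤ) (up ℤ)} (φ : K ⟶ L)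

/-- The mapping cone of a morphism of bicomplexes, taken in the horizontal direction: its column
`i` is the complex `K^{i+1} ⊕ L^i`. -/
noncomputable def cone : HomologicalComplex₂ B (up ℤ) (up ℤ) :=
  mappingCone (C := CochainComplex B ℤ) φ

/-- The inclusion of `K^{i,j}` into the cone, in column `i' = i - 1`. -/
noncomputable def inlX (i i' j : ℤ) (h : i' + 1 = i) : (K.X i).X j ⟶ ((cone φ).X i').X j :=
  ((mappingCone.inl (C := CochainComplex B ℤ) φ).v i i' (by lia)).f j

/-- The inclusion of `L^{i,j}` into the cone, in column `i`. -/
noncomputable def inrX (i j : ℤ) : (L.X i).X j ⟶ ((cone φ).X i).X j :=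
  ((mappingCone.inr (C := CochainComplex B ℤ) φ).f i).f j

/-- The projection from column `i` of the cone onto `K^{i',j}`, where `i' = i + 1`. -/
noncomputable def fstX (i i' j : ℤ) (h : i + 1 = i') : ((cone φ).X i).X j ⟶ (K.X i').X j :=
  ((mappingCone.fst (C := CochainComplex B ℤ) φ).1.v i i' h).f j

/-- The projection from column `i` of the cone onto `L^{i,j}`. -/
noncomputable def sndX (i j : ℤ) : ((cone φ).X i).X j ⟶ (L.X i).X j :=
  ((mappingCone.snd (C := CochainComplex B ℤ) φ).v i i (add_zero i)).f j

lemma inlX_fstX (i i' j : ℤ) (h : i' + 1 = i) : inlX φ i i' j h ≫ fstX φ i' i j h = 𝟙 _ :=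
  (HomologicalComplex.comp_f _ _ _).symm.trans
    (congrArg (fun f => HomologicalComplex.Hom.f f j)
      (mappingCone.inl_v_fst_v (C := CochainComplex B ℤ) φ i i' h))

lemma inlX_sndX (i i' j : ℤ) (h : i' + 1 = i) : inlX φ i i' j h ≫ sndX φ i' j = 0 :=
  (HomologicalComplex.comp_f _ _ _).symm.trans
    (congrArg (fun f => HomologicalComplex.Hom.f f j)
      (mappingCone.inl_v_snd_v (C := CochainComplex B ℤ) φ i i' (by lia)))

lemma inrX_fstX (i i' j : ℤ) (h : i + 1 = i') : inrX φ i j ≫ fstX φ i i' j h = 0 :=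
  (HomologicalComplex.comp_f _ _ _).symm.trans
    (congrArg (fun f => HomologicalComplex.Hom.f f j)
      (mappingCone.inr_f_fst_v (C := CochainComplex B ℤ) φ i i' (by lia)))

lemma inrX_sndX (i j : ℤ) : inrX φ i j ≫ sndX φ i j = 𝟙 _ :=
  (HomologicalComplex.comp_f _ _ _).symm.trans
    (congrArg (fun f => HomologicalComplex.Hom.f f j)
      (mappingCone.inr_f_snd_v (C := CochainComplex B ℤ) φ i))

lemma cone_id (i i' j : ℤ) (h : i + 1 = i') :
    fstX φ i i' j h ≫ inlX φ i' i j h + sndX φ i j ≫ inrX φ i j = 𝟙 _ :=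
  congrArg (fun f => HomologicalComplex.Hom.f f j)
    (mappingCone.id_X (C := CochainComplex B ℤ) φ i i' h)

/-- The horizontal differential of the cone on the summand coming from `K`. -/
lemma inlX_dh (i i' i'' j : ℤ) (h : i' + 1 = i) (h' : i + 1 = i'') :
    inlX φ i i' j h ≫ ((cone φ).d i' i).f j =
      (φ.f i).f j ≫ inrX φ i j - (K.d i i'').f j ≫ inlX φ i'' i j h' :=
  (HomologicalComplex.comp_f _ _ _).symm.trans
    (congrArg (fun f => HomologicalComplex.Hom.f f j)
      (mappingCone.inl_v_d (C := CochainComplex B ℤ) φ i i' i'' (by lia) (by lia)))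

/-- The inclusions `inlX` commute with vertical differentials, without sign. -/
lemma inlX_dv (i i' j j' : ℤ) (h : i' + 1 = i) :
    inlX φ i i' j h ≫ ((cone φ).X i').d j j' = (K.X i).d j j' ≫ inlX φ i i' j' h :=
  ((mappingCone.inl (C := CochainComplex B ℤ) φ).v i i' (by lia)).comm j j'

/-- The inclusion of `L` into the cone, as a morphism of bicomplexes. -/
noncomputable def inr : L ⟶ cone φ := mappingCone.inr (C := CochainComplex B ℤ) φ

/-- The cochain `Tot K ⟶ Tot (cone φ)` of degree `-1` sending the summand `K^{i,j}` to its copy in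
column `i - 1` of the cone. -/
noncomputable def inlTot : Cochain (K.total (up ℤ)) ((cone φ).total (up ℤ)) (-1) :=
  Cochain.mk fun p q hpq => K.totalDesc fun i j hij =>
    inlX φ i (i - 1) j (by lia) ≫ (cone φ).ιTotal (up ℤ) (i - 1) j q (by dsimp at hij ⊢; lia)

/-- Characterization of `inlTot` with a free index `i'` for the column `i - 1`. -/
lemma ι_inlTot (i i' j p q : ℤ) (hij : i + j = p) (hpq : p + -1 = q) (h : i' + 1 = i) :
    K.ιTotal (up ℤ) i j p hij ≫ (inlTot φ).v p q hpq =
      inlX φ i i' j h ≫ (cone φ).ιTotal (up ℤ) i' j q (by dsimp; lia) := by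
  obtain rfl : i' = i - 1 := by lia
  simp [inlTot]

/-- The coboundary condition making `inlTot` descend to the mapping cone. The vertical terms cancel
because columns `i` and `i - 1` carry opposite signs in a total complex. -/
lemma δ_inlTot : δ (-1) 0 (inlTot φ) =
    Cochain.ofHom (total.map φ (up ℤ) ≫ total.map (inr φ) (up ℤ)) := by
  ext p i j hij
  rw [δ_v (-1) 0 (by lia) _ p p (by lia) (p - 1) (p + 1) rfl rfl, Cochain.ofHom_v]
  dsimp at hij
  rw [Preadditive.comp_add, ← Category.assoc,
    ι_inlTot φ i (i - 1) j p (p - 1) hij (by lia) (by lia),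
    Category.assoc, ι_d (cone φ) (i - 1) i j (j + 1) (p - 1) p (by lia) rfl (by lia) hij (by lia),
    Int.negOnePow_zero, one_smul, ← Category.assoc (K.ιTotal _ _ _ _ _),
    ι_d K i (i + 1) j (j + 1) p (p + 1) rfl rfl hij (by lia) (by lia),
    Preadditive.add_comp, Linear.units_smul_comp, Category.assoc, Category.assoc,
    ι_inlTot φ (i + 1) i j (p + 1) p (by lia) (by lia) rfl,
    ι_inlTot φ i (i - 1) (j + 1) (p + 1) p (by lia) (by lia) (by lia),
    Preadditive.comp_add, Linear.comp_units_smul, ← Category.assoc, ← Category.assoc,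
    inlX_dh φ i (i - 1) (i + 1) j (by lia) rfl, inlX_dv, HomologicalComplex.comp_f,
    ιTotal_map_assoc, ιTotal_map, Int.negOnePow_sub, Int.negOnePow_one]
  simp only [Preadditive.sub_comp, Category.assoc, mul_neg, mul_one, Units.neg_smul]
  change _ = (φ.f i).f j ≫ inrX φ i j ≫ _
  abel

/-- The canonical morphism `Cone (Tot φ) ⟶ Tot (Cone φ)`. -/
noncomputable def fromCone :
    mappingCone (total.map φ (up ℤ)) ⟶ (cone φ).total (up ℤ) :=
  mappingCone.desc _ (inlTot φ) (total.map (inr φ) (up ℤ)) (δ_inlTot φ)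

/-- The inverse of `fromCone` in degree `n`, defined summand by summand. -/
noncomputable def toConeX (n : ℤ) :
    ((cone φ).total (up ℤ)).X n ⟶ (mappingCone (total.map φ (up ℤ))).X n :=
  (cone φ).totalDesc fun i j hij =>
    fstX φ i (i + 1) j rfl ≫ K.ιTotal (up ℤ) (i + 1) j (n + 1) (by dsimp at hij ⊢; lia) ≫
        (mappingCone.inl (total.map φ (up ℤ))).v (n + 1) n (by lia) +
      sndX φ i j ≫ L.ιTotal (up ℤ) i j n hij ≫ (mappingCone.inr (total.map φ (up ℤ))).f n

lemma ι_toConeX (i i' j n n' : ℤ) (hi : i + 1 = i') (hn : n + 1 = n') (hij : i + j = n) :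
    (cone φ).ιTotal (up ℤ) i j n hij ≫ toConeX φ n =
    fstX φ i i' j hi ≫ K.ιTotal (up ℤ) i' j n' (by dsimp at hij ⊢; lia) ≫
        (mappingCone.inl (total.map φ (up ℤ))).v n' n (by lia) +
      sndX φ i j ≫ L.ιTotal (up ℤ) i j n hij ≫ (mappingCone.inr (total.map φ (up ℤ))).f n := by
  subst hi hn
  simp [toConeX]

lemma fromCone_toConeX (n : ℤ) : (fromCone φ).f n ≫ toConeX φ n = 𝟙 _ := by
  refine mappingCone.ext_from _ (n + 1) n rfl ?_ ?_
  · rw [fromCone, mappingCone.inl_v_desc_f_assoc, Category.comp_id]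
    refine total.hom_ext (up ℤ) fun i j hij => ?_
    dsimp at hij
    rw [← Category.assoc, ι_inlTot φ i (i - 1) j _ _ hij (by lia) (by lia), Category.assoc,
      ι_toConeX φ (i - 1) i j n (n + 1) (by lia) rfl (by lia), Preadditive.comp_add,
      ← Category.assoc, inlX_fstX, Category.id_comp, ← Category.assoc (inlX φ i (i - 1) j _),
      inlX_sndX, zero_comp, add_zero]
  · rw [fromCone, mappingCone.inr_f_desc_f_assoc, Category.comp_id]
    refine total.hom_ext (up ℤ) fun i j hij => ?_
    rw [ιTotal_map_assoc, ι_toConeX φ i (i + 1) j n (n + 1) rfl rfl hij]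
    change inrX φ i j ≫ _ = _
    rw [Preadditive.comp_add, ← Category.assoc, inrX_fstX, zero_comp, zero_add,
      ← Category.assoc, inrX_sndX, Category.id_comp]

lemma toConeX_fromCone (n : ℤ) : toConeX φ n ≫ (fromCone φ).f n = 𝟙 _ := by
  refine total.hom_ext (up ℤ) fun i j hij => ?_
  rw [← Category.assoc, ι_toConeX φ i (i + 1) j n (n + 1) rfl rfl hij, Category.comp_id,
    fromCone, Preadditive.add_comp, Category.assoc, Category.assoc, Category.assoc,
    Category.assoc, mappingCone.inl_v_desc_f, mappingCone.inr_f_desc_f, ιTotal_map,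
    ι_inlTot φ (i + 1) i j (n + 1) n (by dsimp at hij; lia) (by lia) rfl]
  change _ + sndX φ i j ≫ inrX φ i j ≫ _ = _
  rw [← Category.assoc, ← Category.assoc, ← Preadditive.add_comp, cone_id, Category.id_comp]

/-- Totalization commutes with mapping cones. -/
noncomputable def totalConeIso :
    mappingCone (total.map φ (up ℤ)) ≅ (cone φ).total (up ℤ) :=
  HomologicalComplex.Hom.isoOfComponents
    (fun n => ⟨(fromCone φ).f n, toConeX φ n, fromCone_toConeX φ n, toConeX_fromCone φ n⟩)
    (fun i j _ => (fromCone φ).comm i j)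

end TotalCone

/-- **Proposition 4.6(3), first part.** Let `A` be an additive category, `B` an additive
category with countable coproducts, and `F : A ⥤ C(B)` an additive functor.  Then for
every morphism `f : M → N` of cochain complexes over `A`, the image under `F^C` of the
mapping cone of `f` is isomorphic to the mapping cone of `F^C(f) : F^C(M) → F^C(N)`. -/
theorem extC_mappingCone_iso (F : A ⥤ CochainComplex B ℤ) [F.Additive]
    {M N : CochainComplex A ℤ} (f : M ⟶ N) :
    Nonempty
      ((extC F).obj (CochainComplex.mappingCone f) ≅
        CochainComplex.mappingCone ((extC F).map f)) :=
  ⟨HomologicalComplex₂.total.mapIso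
      (L := TotalCone.cone ((extDC F).map f))
      (CochainComplex.mappingCone.mapHomologicalComplexIso f F) (ComplexShape.up ℤ) ≪≫
    (TotalCone.totalConeIso ((extDC F).map f)).symm⟩

end ExtensionOfFunctors
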